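/- Let μ be a probability measure on a Polish space X. For any probability measure ν absolutely continuous with respect to μ whose density f = dν/dμ satisfies ∫ |f| log|f| dμ < ∞, one has ‖dν/dμ − 1‖_ρ^* ≤ 2√(H(ν|μ)) + H(ν|μ). -/

import Mathlib

open MeasureTheory ENNReal Set
open scoped NNReal ENNReal

noncomputable section

open scoped Classical in
/-- Relative entropy `H(ν|μ)`. -/
def relEntropy {X : Type*} [MeasurableSpace X] (ν μ : Measure X) : ℝ≥0∞ :=
  if ν ≪ μ ∧ Integrable (fun x => Real.log (ν.rnDeriv μ x).toReal) ν
  then ENNReal.ofReal (∫ x, Real.log (ν.rnDeriv μ x).toReal ∂ν) else ⊤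

/-- Dual Orlicz norm for the Young function `ρ(s) = e^{|s|} − 1`. -/
def dualOrliczNorm {X : Type*} [MeasurableSpace X] (μ : Measure X) (f : X → ℝ) : ℝ :=
  sSup {r : ℝ | ∃ φ : X → ℝ, Measurable φ ∧
    (∫⁻ x, ENNReal.ofReal (Real.exp |φ x|) ∂μ) ≤ 2 ∧ r = ∫ x, f x * φ x ∂μ}

/-!
The functions `klFun x = x log x + 1 - x` and `eʸ - 1` are convex conjugates, so Young's inequality
bounds `t (f - 1) φ` by `klFun f + (e^{tφ} - 1 - tφ)`. For `|t| ≤ 1` the last term is at most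
`t² (e^{|φ|} - 1)`, and `∫ (e^{|φ|} - 1) dμ ≤ 1` on the dual unit ball. Integrating gives
`t ∫ (f - 1) φ dμ ≤ H + t²` for all `t ∈ (0, 1]`, and optimising over `t` gives the bound.
-/

open InformationTheory

lemma hasSum_exp_sub_one_sub (x : ℝ) :
    HasSum (fun n : ℕ ↦ x ^ (n + 2) / (n + 2).factorial) (Real.exp x - 1 - x) := by
  have exp_series := NormedSpace.expSeries_div_hasSum_exp x
  rw [← Real.exp_eq_exp_ℝ] at exp_series
  simpa [Finset.sum_range_succ, sub_sub] using (hasSum_nat_add_iff' 2).mpr exp_series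

lemma exp_mul_sub_one_sub_le {t : ℝ} (ht : |t| ≤ 1) (a : ℝ) :
    Real.exp (t * a) - 1 - t * a ≤ t ^ 2 * (Real.exp |a| - 1 - |a|) := by
  refine hasSum_le (fun n ↦ ?_) (hasSum_exp_sub_one_sub (t * a))
    ((hasSum_exp_sub_one_sub |a|).mul_left (t ^ 2))
  rw [← mul_div_assoc]
  gcongr
  calc (t * a) ^ (n + 2) ≤ |(t * a) ^ (n + 2)| := le_abs_self _
    _ = |t| ^ n * (t ^ 2 * |a| ^ (n + 2)) := by rw [abs_pow, abs_mul, ← sq_abs t]; ring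
    _ ≤ t ^ 2 * |a| ^ (n + 2) :=
      mul_le_of_le_one_left (by positivity) (pow_le_one₀ (abs_nonneg t) ht)

lemma mul_le_klFun_add_exp_sub_one {x : ℝ} (hx : 0 ≤ x) (y : ℝ) :
    x * y ≤ klFun x + (Real.exp y - 1) := by
  rw [klFun_apply]
  rcases hx.eq_or_lt with rfl | hx
  · simp [Real.exp_nonneg]
  · have tangent := Real.add_one_le_exp (y - Real.log x)
    rw [Real.exp_sub, Real.exp_log hx, le_div_iff₀ hx] at tangent
    linarith

lemma mul_sub_one_mul_le_klFun_add {t x : ℝ} (ht : |t| ≤ 1) (hx : 0 ≤ x) (a : ℝ) :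
    t * ((x - 1) * a) ≤ klFun x + t ^ 2 * (Real.exp |a| - 1) := by
  have young := mul_le_klFun_add_exp_sub_one hx (t * a)
  have exp_remainder := exp_mul_sub_one_sub_le ht a
  have : 0 ≤ t ^ 2 * |a| := by positivity
  linarith

lemma abs_sub_one_mul_le_klFun_add {x : ℝ} (hx : 0 ≤ x) (a : ℝ) :
    |(x - 1) * a| ≤ klFun x + (Real.exp |a| - 1) := by
  have upper := mul_sub_one_mul_le_klFun_add (t := 1) (by simp) hx a
  have lower := mul_sub_one_mul_le_klFun_add (t := -1) (by simp) hx a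
  rw [abs_le]
  constructor <;> linarith

lemma le_two_mul_sqrt_add_of_forall_mul_le {I K : ℝ} (hK : 0 ≤ K)
    (h : ∀ t, 0 < t → t ≤ 1 → t * I ≤ K + t ^ 2) : I ≤ 2 * √K + K := by
  rcases le_or_gt I 0 with hI | hI
  · exact hI.trans (by positivity)
  -- `t = I / 2` maximises `t * I - t ^ 2`; when it exceeds `1`, use `t = 1`.
  rcases le_or_gt I 2 with hI₂ | hI₂
  · have : I / 2 ≤ √K := Real.le_sqrt_of_sq_le (by linarith [h (I / 2) (by linarith) (by linarith)])
    linarith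
  · have hIK := h 1 one_pos le_rfl
    have : 1 ≤ √K := Real.one_le_sqrt.mpr (by linarith)
    linarith

section

variable {X : Type*} [MeasurableSpace X] {μ : Measure X} {f φ : X → ℝ}

lemma integrable_sub_one_mul (hfm : AEStronglyMeasurable f μ) (hf : 0 ≤ᵐ[μ] f)
    (hK : Integrable (fun x ↦ klFun (f x)) μ) (hφm : AEStronglyMeasurable φ μ)
    (hφ : Integrable (fun x ↦ Real.exp |φ x| - 1) μ) :
    Integrable (fun x ↦ (f x - 1) * φ x) μ := by
  refine (hK.add hφ).mono' ((hfm.sub aestronglyMeasurable_const).mul hφm) ?_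
  filter_upwards [hf] with x hx
  exact abs_sub_one_mul_le_klFun_add hx (φ x)

lemma integral_sub_one_mul_le (hfm : AEStronglyMeasurable f μ) (hf : 0 ≤ᵐ[μ] f)
    (hK : Integrable (fun x ↦ klFun (f x)) μ) (hφm : AEStronglyMeasurable φ μ)
    (hφ : Integrable (fun x ↦ Real.exp |φ x| - 1) μ)
    (hφ_le : ∫ x, (Real.exp |φ x| - 1) ∂μ ≤ 1) :
    ∫ x, (f x - 1) * φ x ∂μ ≤ 2 * √(∫ x, klFun (f x) ∂μ) + ∫ x, klFun (f x) ∂μ := by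
  have hK₀ : 0 ≤ ∫ x, klFun (f x) ∂μ := integral_nonneg_of_ae (hf.mono fun _ ↦ klFun_nonneg)
  refine le_two_mul_sqrt_add_of_forall_mul_le hK₀ fun t ht₀ ht₁ ↦ ?_
  calc t * ∫ x, (f x - 1) * φ x ∂μ
      = ∫ x, t * ((f x - 1) * φ x) ∂μ := (integral_const_mul _ _).symm
    _ ≤ ∫ x, (klFun (f x) + t ^ 2 * (Real.exp |φ x| - 1)) ∂μ := by
      refine integral_mono_ae ((integrable_sub_one_mul hfm hf hK hφm hφ).const_mul t)
        (hK.add (hφ.const_mul (t ^ 2))) ?_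
      filter_upwards [hf] with x hx
      exact mul_sub_one_mul_le_klFun_add (abs_le.mpr ⟨by linarith, ht₁⟩) hx (φ x)
    _ = (∫ x, klFun (f x) ∂μ) + t ^ 2 * ∫ x, (Real.exp |φ x| - 1) ∂μ := by
      rw [integral_add hK (hφ.const_mul (t ^ 2)), integral_const_mul]
    _ ≤ (∫ x, klFun (f x) ∂μ) + t ^ 2 := by
      gcongr
      exact mul_le_of_le_one_right (sq_nonneg t) hφ_le

lemma integrable_exp_abs_sub_one_and_integral_le_one [IsFiniteMeasure μ] (hμ : 1 ≤ μ univ)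
    (hφm : AEStronglyMeasurable φ μ) (hφ : ∫⁻ x, ENNReal.ofReal (Real.exp |φ x|) ∂μ ≤ 2) :
    Integrable (fun x ↦ Real.exp |φ x| - 1) μ ∧ ∫ x, (Real.exp |φ x| - 1) ∂μ ≤ 1 := by
  have exp_meas : AEStronglyMeasurable (fun x ↦ Real.exp |φ x|) μ :=
    Real.continuous_exp.comp_aestronglyMeasurable hφm.norm
  have exp_nonneg : 0 ≤ᵐ[μ] fun x ↦ Real.exp |φ x| := ae_of_all _ fun x ↦ (Real.exp_pos _).le
  have exp_int : Integrable (fun x ↦ Real.exp |φ x|) μ :=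
    (lintegral_ofReal_ne_top_iff_integrable exp_meas exp_nonneg).mp
      (ne_top_of_le_ne_top ofNat_ne_top hφ)
  have exp_le : ∫ x, Real.exp |φ x| ∂μ ≤ 2 := by
    rw [integral_eq_lintegral_of_nonneg_ae exp_nonneg exp_meas]
    exact ENNReal.toReal_mono ofNat_ne_top hφ
  have mass_ge : 1 ≤ μ.real univ := ENNReal.toReal_mono (measure_ne_top μ univ) hμ
  refine ⟨exp_int.sub (integrable_const 1), ?_⟩
  rw [integral_sub exp_int (integrable_const 1), integral_const, smul_eq_mul, mul_one]
  linarith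

theorem dualOrliczNorm_sub_one_le [IsFiniteMeasure μ] (hμ : 1 ≤ μ univ)
    (hfm : AEStronglyMeasurable f μ) (hf : 0 ≤ᵐ[μ] f)
    (hK : Integrable (fun x ↦ klFun (f x)) μ) :
    dualOrliczNorm μ (fun x ↦ f x - 1) ≤
      2 * √(∫ x, klFun (f x) ∂μ) + ∫ x, klFun (f x) ∂μ := by
  have hK₀ : 0 ≤ ∫ x, klFun (f x) ∂μ := integral_nonneg_of_ae (hf.mono fun _ ↦ klFun_nonneg)
  refine Real.sSup_le ?_ (by positivity)
  rintro _ ⟨φ, hφm, hφ, rfl⟩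
  obtain ⟨hφ_int, hφ_le⟩ :=
    integrable_exp_abs_sub_one_and_integral_le_one hμ hφm.aestronglyMeasurable hφ
  exact integral_sub_one_mul_le hfm hf hK hφm.aestronglyMeasurable hφ_int hφ_le

lemma relEntropy_eq_klDiv {ν : Measure X} (h : ν univ = μ univ) :
    relEntropy ν μ = klDiv ν μ := by
  simp only [relEntropy, klDiv_def, llr_def, measureReal_def, h, add_sub_cancel_right]
  congr

theorem dual_orlicz_entropy_bound_general [IsFiniteMeasure μ] (hμ : 1 ≤ μ univ)
    {ν : Measure X} [IsFiniteMeasure ν] (hνμ : klDiv ν μ ≠ ∞) :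
    dualOrliczNorm μ (fun x ↦ (ν.rnDeriv μ x).toReal - 1) ≤
      2 * √(klDiv ν μ).toReal + (klDiv ν μ).toReal := by
  obtain ⟨hac, hllr⟩ := klDiv_ne_top_iff.mp hνμ
  rw [toReal_klDiv_eq_integral_klFun hac]
  exact dualOrliczNorm_sub_one_le hμ
    (Measure.measurable_rnDeriv ν μ).ennreal_toReal.aestronglyMeasurable
    (ae_of_all _ fun _ ↦ toReal_nonneg) ((integrable_klFun_rnDeriv_iff hac).mpr hllr)

end

/-- `‖dν/dμ − 1‖_ρ^* ≤ 2√(H(ν|μ)) + H(ν|μ)`. -/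
theorem dual_orlicz_entropy_bound
    {X : Type*} [TopologicalSpace X] [PolishSpace X] [MeasurableSpace X] [BorelSpace X]
    (μ : Measure X) [IsProbabilityMeasure μ]
    (ν : Measure X) [IsProbabilityMeasure ν]
    (hac : ν ≪ μ)
    (hint : Integrable
      (fun x => (ν.rnDeriv μ x).toReal * Real.log (ν.rnDeriv μ x).toReal) μ) :
    dualOrliczNorm μ (fun x => (ν.rnDeriv μ x).toReal - 1) ≤
      2 * Real.sqrt (relEntropy ν μ).toReal + (relEntropy ν μ).toReal := by
  rw [relEntropy_eq_klDiv (by simp)]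
  exact dual_orlicz_entropy_bound_general (by simp)
    (klDiv_ne_top hac ((integrable_rnDeriv_mul_log_iff hac).mp hint))

end
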